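/- Let q ∈ ℂ with |q| ≥ 6, and let ρ > 0 and σ > 0 satisfy ρ² + σ² ≤ |q|². For each integer j ≥ 2 let c_j : ℂ → ℂ satisfy |c_j(w)| ≤ 2^{j−1} |q|^{(j−1)|w|} for all w ∈ ℂ with |w| ≤ |q|. Let y, h : ℂ → ℂ both satisfy |y(w)| ≤ 1/|q| and |h(w)| ≤ 1/|q| for all w ∈ D(ρ,σ), together with y(z/q) = y(z)/|q| and h(z/q) = h(z)/|q| for all z ∈ D(ρ,σ). Define T[y](z) = ∑_{j=2}^{∞} c_j(z/q) y(z/q)^j and similarly T[h](z). Then for every z ∈ D(ρ,σ), one has |T[y](z) − T[h](z)| ≤ (1/4) · sup_{w ∈ D(ρ,σ)} |y(w) − h(w)|. -/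

import Mathlib

/-!
Write `Q = |q|`. For `|z| ≤ Q` the point `z / q` lies in the closed unit disc, where the `j`-th
coefficient is at most `(2Q)^(j-1)`, while the scaling relation gains a factor `1 / Q`, so that `y`
and `h` are at most `1 / Q²` at `z / q` and differ there by at most `S / Q`, where `S` is their
sup-distance. Telescoping `a^j - b^j` bounds the `j`-th term of the difference by
`j r^(j-1) S / Q` with `r = 2 / Q`, and `∑_{j ≥ 2} j r^(j-1) = (1 - r)⁻² - 1`. For `Q ≥ 6` this
sum is at most `5 / 4`, so the contraction ratio is at most `5 / 24`.
-/

open Metric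

section PowerSeries

variable {A : Type*}

lemma norm_pow_succ_sub_pow_succ_le [SeminormedRing A] {a b : A} {B : ℝ} (ha : ‖a‖ ≤ B)
    (hb : ‖b‖ ≤ B) (n : ℕ) : ‖a ^ (n + 1) - b ^ (n + 1)‖ ≤ (n + 1) * B ^ n * ‖a - b‖ := by
  have hB : 0 ≤ B := (norm_nonneg a).trans ha
  induction n with
  | zero => simp
  | succ n ih =>
    have hb_pow : ‖b ^ (n + 1)‖ ≤ B ^ (n + 1) :=
      (norm_pow_le' b n.succ_pos).trans (by gcongr)
    calc ‖a ^ (n + 1 + 1) - b ^ (n + 1 + 1)‖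
        = ‖a * (a ^ (n + 1) - b ^ (n + 1)) + (a - b) * b ^ (n + 1)‖ := by
          rw [pow_succ' a, pow_succ' b, mul_sub, sub_mul, sub_add_sub_cancel]
      _ ≤ ‖a‖ * ‖a ^ (n + 1) - b ^ (n + 1)‖ + ‖a - b‖ * ‖b ^ (n + 1)‖ :=
          norm_add_le_of_le (norm_mul_le _ _) (norm_mul_le _ _)
      _ ≤ B * ((n + 1) * B ^ n * ‖a - b‖) + ‖a - b‖ * B ^ (n + 1) := by gcongr
      _ = ((n + 1 : ℕ) + 1) * B ^ (n + 1) * ‖a - b‖ := by push_cast; ring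

lemma hasSum_add_two_mul_geometric {𝕜 : Type*} [NormedDivisionRing 𝕜] [HasSummableGeomSeries 𝕜]
    {r : 𝕜} (hr : ‖r‖ < 1) :
    HasSum (fun n : ℕ ↦ ((n : 𝕜) + 2) * r ^ (n + 1)) ((1 - r)⁻¹ ^ 2 - 1) := by
  have hderiv : HasSum (fun n : ℕ ↦ ((n : 𝕜) + 1) * r ^ n) ((1 - r)⁻¹ ^ 2) := by
    simpa using hasSum_choose_mul_geometric_of_norm_lt_one 1 hr
  simpa [add_assoc, one_add_one_eq_two] using (hasSum_nat_add_iff' 1).2 hderiv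

variable [NormedRing A] [CompleteSpace A] {u : ℕ → A} {M B : ℝ}

lemma summable_mul_pow_add_two (hu : ∀ n, ‖u n‖ ≤ M ^ (n + 1)) (hMB : M * B < 1) {a : A}
    (ha : ‖a‖ ≤ B) : Summable fun n ↦ u n * a ^ (n + 2) := by
  have hM : 0 ≤ M := by simpa using (norm_nonneg _).trans (hu 0)
  have hB : 0 ≤ B := (norm_nonneg a).trans ha
  have hgeom := (summable_geometric_of_lt_one (mul_nonneg hM hB) hMB).mul_left (M * B * B)
  refine .of_norm_bounded hgeom fun n ↦ ?_
  calc ‖u n * a ^ (n + 2)‖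
      ≤ ‖u n‖ * ‖a‖ ^ (n + 2) :=
        (norm_mul_le _ _).trans (by gcongr; exact norm_pow_le' a (n + 1).succ_pos)
    _ ≤ M ^ (n + 1) * B ^ (n + 2) := by gcongr; exact hu n
    _ = M * B * B * (M * B) ^ n := by ring

lemma norm_tsum_mul_pow_add_two_sub_le (hu : ∀ n, ‖u n‖ ≤ M ^ (n + 1)) (hMB : M * B < 1) {a b : A}
    (ha : ‖a‖ ≤ B) (hb : ‖b‖ ≤ B) :
    ‖∑' n, u n * a ^ (n + 2) - ∑' n, u n * b ^ (n + 2)‖ ≤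
      ((1 - M * B)⁻¹ ^ 2 - 1) * ‖a - b‖ := by
  have hM : 0 ≤ M := by simpa using (norm_nonneg _).trans (hu 0)
  have hB : 0 ≤ B := (norm_nonneg a).trans ha
  have hr : ‖M * B‖ < 1 := by rwa [Real.norm_of_nonneg (mul_nonneg hM hB)]
  rw [← (summable_mul_pow_add_two hu hMB ha).tsum_sub (summable_mul_pow_add_two hu hMB hb)]
  refine tsum_of_norm_bounded ((hasSum_add_two_mul_geometric hr).mul_right ‖a - b‖) fun n ↦ ?_
  calc ‖u n * a ^ (n + 2) - u n * b ^ (n + 2)‖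
      ≤ ‖u n‖ * ‖a ^ (n + 2) - b ^ (n + 2)‖ := by rw [← mul_sub]; exact norm_mul_le _ _
    _ ≤ M ^ (n + 1) * (((n + 1 : ℕ) + 1) * B ^ (n + 1) * ‖a - b‖) := by
        gcongr
        exacts [hu n, norm_pow_succ_sub_pow_succ_le ha hb (n + 1)]
    _ = (n + 2) * (M * B) ^ (n + 1) * ‖a - b‖ := by push_cast; ring

end PowerSeries

lemma pow_mul_rpow_le_mul_pow {K Q t : ℝ} (hK : 0 ≤ K) (hQ : 1 ≤ Q) (ht : t ≤ 1) (n : ℕ) :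
    K ^ n * Q ^ (n * t) ≤ (K * Q) ^ n := by
  rw [mul_pow, ← Real.rpow_natCast Q n]
  gcongr
  exact mul_le_of_le_one_right n.cast_nonneg ht

lemma norm_sub_le_iSup_norm_sub {X E : Type*} [SeminormedAddCommGroup E] {s : Set X}
    {f g : X → E} {B C : ℝ} (hf : ∀ x ∈ s, ‖f x‖ ≤ B) (hg : ∀ x ∈ s, ‖g x‖ ≤ C) {x : X}
    (hx : x ∈ s) : ‖f x - g x‖ ≤ ⨆ w : s, ‖f w - g w‖ := by
  refine le_ciSup (f := fun w : s ↦ ‖f w - g w‖) ⟨B + C, ?_⟩ ⟨x, hx⟩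
  rintro _ ⟨w, rfl⟩
  exact norm_sub_le_of_le (hf w w.2) (hg w w.2)

/-- The rectangle `D(ρ,σ)` of the statement, centred at the origin with half-sides `ρ` and `σ`. -/
def closedRectangle (ρ σ : ℝ) : Set ℂ :=
  {z | |z.re| ≤ ρ ∧ |z.im| ≤ σ}

lemma closedRectangle_subset_closedBall {ρ σ R : ℝ} (hR : 0 ≤ R) (h : ρ ^ 2 + σ ^ 2 ≤ R ^ 2) :
    closedRectangle ρ σ ⊆ closedBall 0 R := by
  rintro z ⟨hre, him⟩
  rw [mem_closedBall_zero_iff]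
  refine le_of_sq_le_sq ?_ hR
  calc ‖z‖ ^ 2 = |z.re| ^ 2 + |z.im| ^ 2 := by
        rw [Complex.sq_norm, Complex.normSq_apply, sq_abs, sq_abs, sq, sq]
    _ ≤ ρ ^ 2 + σ ^ 2 := by gcongr
    _ ≤ R ^ 2 := h

section Operator

variable {𝕜 A : Type*} [NormedDivisionRing 𝕜] [NormedRing A]

/-- The operator `T[f](z) = ∑_{j ≥ 2} c_j(z/q) f(z/q)^j`, whose sum is indexed by `n = j - 2`. -/
noncomputable def dilationSeries (q : 𝕜) (c : ℕ → 𝕜 → A) (f : 𝕜 → A) (z : 𝕜) : A :=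
  ∑' n : ℕ, c (n + 2) (z / q) * f (z / q) ^ (n + 2)

theorem stmt19_general [NormedAlgebra ℝ A] [CompleteSpace A] {q : 𝕜} {K : ℝ}
    (hq : 1 ≤ ‖q‖) (hKq : K < ‖q‖) {D : Set 𝕜} (hD : D ⊆ closedBall 0 ‖q‖)
    {c : ℕ → 𝕜 → A} (hc : ∀ j : ℕ, 2 ≤ j → ∀ w : 𝕜, ‖w‖ ≤ 1 →
      ‖c j w‖ ≤ K ^ (j - 1) * ‖q‖ ^ (((j : ℝ) - 1) * ‖w‖))
    {y h : 𝕜 → A} (hy : ∀ w ∈ D, ‖y w‖ ≤ 1 / ‖q‖) (hh : ∀ w ∈ D, ‖h w‖ ≤ 1 / ‖q‖)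
    (hy_scale : ∀ z ∈ D, y (z / q) = ‖q‖⁻¹ • y z)
    (hh_scale : ∀ z ∈ D, h (z / q) = ‖q‖⁻¹ • h z) {z : 𝕜} (hz : z ∈ D) :
    ‖dilationSeries q c y z - dilationSeries q c h z‖ ≤
      ((1 - K / ‖q‖)⁻¹ ^ 2 - 1) / ‖q‖ * ⨆ w : D, ‖y w - h w‖ := by
  have hQ : 0 < ‖q‖ := one_pos.trans_le hq
  have hK : 0 ≤ K := by simpa using (norm_nonneg _).trans (hc 2 le_rfl 0 (by simp))
  have hzq : ‖z / q‖ ≤ 1 := by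
    rw [norm_div]
    exact div_le_one_of_le₀ (mem_closedBall_zero_iff.1 (hD hz)) hQ.le
  have hcoeff (n : ℕ) : ‖c (n + 2) (z / q)‖ ≤ (K * ‖q‖) ^ (n + 1) := by
    have hexp : ((n + 2 : ℕ) : ℝ) - 1 = (n + 1 : ℕ) := by push_cast; ring
    exact (hexp ▸ hc (n + 2) (by omega) _ hzq).trans (pow_mul_rpow_le_mul_pow hK hq hzq (n + 1))
  have norm_scaled (v : A) : ‖‖q‖⁻¹ • v‖ = ‖q‖⁻¹ * ‖v‖ := by rw [norm_smul, norm_inv, norm_norm]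
  have hsmall {v : A} (hv : ‖v‖ ≤ 1 / ‖q‖) : ‖‖q‖⁻¹ • v‖ ≤ ‖q‖⁻¹ * (1 / ‖q‖) := by
    rw [norm_scaled]
    gcongr
  have hratio : K * ‖q‖ * (‖q‖⁻¹ * (1 / ‖q‖)) = K / ‖q‖ := by field_simp
  have hratio_lt : K / ‖q‖ < 1 := (div_lt_one hQ).2 hKq
  have hlip := norm_tsum_mul_pow_add_two_sub_le hcoeff (hratio.trans_lt hratio_lt)
    (hsmall (hy z hz)) (hsmall (hh z hz))
  rw [hratio, ← smul_sub, norm_scaled, ← mul_assoc, ← div_eq_mul_inv] at hlip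
  have hconst : 0 ≤ ((1 - K / ‖q‖)⁻¹ ^ 2 - 1) / ‖q‖ := by
    have hinv : 1 ≤ (1 - K / ‖q‖)⁻¹ :=
      (one_le_inv₀ (sub_pos.2 hratio_lt)).2 (sub_le_self _ (by positivity))
    exact div_nonneg (sub_nonneg.2 (one_le_pow₀ hinv)) hQ.le
  rw [dilationSeries, dilationSeries, hy_scale z hz, hh_scale z hz]
  exact hlip.trans (mul_le_mul_of_nonneg_left (norm_sub_le_iSup_norm_sub hy hh hz) hconst)

end Operator

lemma contraction_ratio_le_quarter {Q : ℝ} (hQ : 6 ≤ Q) :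
    ((1 - 2 / Q)⁻¹ ^ 2 - 1) / Q ≤ 1 / 4 := by
  have hr : 2 / Q ≤ 1 / 3 := by
    rw [div_le_div_iff₀ (by linarith) (by norm_num)]
    linarith
  have hinv : (1 - 2 / Q)⁻¹ ≤ 3 / 2 := inv_le_of_inv_le₀ (by norm_num) (by linarith)
  have hinv_nonneg : 0 ≤ (1 - 2 / Q)⁻¹ := inv_nonneg.2 (by linarith)
  rw [div_le_iff₀ (by linarith)]
  nlinarith

/-- With `|q| ≥ 6`, `ρ² + σ² ≤ |q|²`, and
`|c_j(w)| ≤ 2^{j-1} |q|^{(j-1)|w|}` for `|w| ≤ |q|`, the operator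
`T[y](z) = ∑_{j≥2} c_j(z/q) y(z/q)^j` is a contraction with ratio `1/4` on
`D(ρ,σ)` with respect to the sup-metric. -/
theorem stmt19 (q : ℂ) (hq : 6 ≤ ‖q‖) (ρ σ : ℝ) (hρ : 0 < ρ) (hσ : 0 < σ)
    (hρσ : ρ ^ 2 + σ ^ 2 ≤ ‖q‖ ^ 2)
    (c : ℕ → ℂ → ℂ)
    (hc : ∀ j : ℕ, 2 ≤ j → ∀ w : ℂ, ‖w‖ ≤ ‖q‖ →
      ‖c j w‖ ≤ 2 ^ (j - 1) * ‖q‖ ^ (((j : ℝ) - 1) * ‖w‖))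
    (y h : ℂ → ℂ)
    (hybd : ∀ w : ℂ, |w.re| ≤ ρ → |w.im| ≤ σ → ‖y w‖ ≤ 1 / ‖q‖)
    (hhbd : ∀ w : ℂ, |w.re| ≤ ρ → |w.im| ≤ σ → ‖h w‖ ≤ 1 / ‖q‖)
    (hyscale : ∀ z : ℂ, |z.re| ≤ ρ → |z.im| ≤ σ → y (z / q) = y z / (‖q‖ : ℂ))
    (hhscale : ∀ z : ℂ, |z.re| ≤ ρ → |z.im| ≤ σ → h (z / q) = h z / (‖q‖ : ℂ)) :
    ∀ z : ℂ, |z.re| ≤ ρ → |z.im| ≤ σ →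
      ‖(∑' n : ℕ, c (n + 2) (z / q) * y (z / q) ^ (n + 2)) -
        (∑' n : ℕ, c (n + 2) (z / q) * h (z / q) ^ (n + 2))‖ ≤
        (1 / 4) * ⨆ w : {w : ℂ // |w.re| ≤ ρ ∧ |w.im| ≤ σ}, ‖y w.1 - h w.1‖ := by
  have hD : closedRectangle ρ σ ⊆ closedBall 0 ‖q‖ :=
    closedRectangle_subset_closedBall (norm_nonneg q) hρσ
  have scale {f : ℂ → ℂ} (hf : ∀ z : ℂ, |z.re| ≤ ρ → |z.im| ≤ σ → f (z / q) = f z / (‖q‖ : ℂ)) :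
      ∀ z ∈ closedRectangle ρ σ, f (z / q) = ‖q‖⁻¹ • f z := fun z hz ↦ by
    rw [hf z hz.1 hz.2, Complex.real_smul, Complex.ofReal_inv, div_eq_inv_mul]
  intro z hre him
  have hcontr := stmt19_general (by linarith) (by linarith) hD
    (fun j hj w hw ↦ hc j hj w (by linarith)) (fun w hw ↦ hybd w hw.1 hw.2)
    (fun w hw ↦ hhbd w hw.1 hw.2) (scale hyscale) (scale hhscale) ⟨hre, him⟩
  exact hcontr.trans (mul_le_mul_of_nonneg_right (contraction_ratio_le_quarter hq)
    (Real.iSup_nonneg fun _ ↦ norm_nonneg _))
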